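/- Let X be a compact metric space with metric d and α : X → X a homeomorphism, with E the closure of {α^n : n ∈ ℤ} in the space of self-maps of X with the product topology. Suppose the ℤ-action is almost distal, i.e., every forward proximal pair is forward asymptotic and every backward proximal pair is backward asymptotic. Then E is nearly simple: E has a unique minimal two-sided ideal, and every element of E having no compositional inverse in E belongs to that ideal. -/

import Mathlib

/-- The `n`-th power (`n : ℤ`) of a homeomorphism `α`, as a self-map. -/
def zIter {X : Type*} [TopologicalSpace X] (α : X ≃ₜ X) (n : ℤ) : X → X :=
  if 0 ≤ n then (⇑α)^[n.toNat] else (⇑α.symm)^[(-n).toNat]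

/-- A two-sided ideal of the subsemigroup `S` of self-maps of `X` (under composition). -/
def IsIdealIn {X : Type*} (S I : Set (X → X)) : Prop :=
  I.Nonempty ∧ I ⊆ S ∧ ∀ f ∈ S, ∀ g ∈ I, f ∘ g ∈ I ∧ g ∘ f ∈ I

open Filter Topology in
/-- limit set of the integer powers along a filter. -/
def PL {X : Type*} [TopologicalSpace X] (α : X ≃ₜ X) (l : Filter ℤ) : Set (X → X) :=
  {f | MapClusterPt f l (fun n => zIter α n)}

theorem zIter_eq {X : Type*} [TopologicalSpace X] (α : X ≃ₜ X) (n : ℤ) :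
    zIter α n = ⇑(α ^ n) := by
  have key : ∀ (β : X ≃ₜ X) (m : ℕ), (⇑β)^[m] = ⇑(β ^ m) := by
    intro β m
    induction m with
    | zero => rfl
    | succ k ih => rw [Function.iterate_succ, ih, pow_succ]; rfl
  unfold zIter
  split_ifs with h
  · rw [key]
    conv_rhs => rw [← Int.toNat_of_nonneg h, zpow_natCast]
  · have h2 : n = -(((-n).toNat : ℕ) : ℤ) := by omega
    rw [key]
    conv_rhs => rw [h2, zpow_neg, zpow_natCast, ← inv_pow]
    rfl

theorem zIter_add {X : Type*} [TopologicalSpace X] (α : X ≃ₜ X) (m n : ℤ) :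
    zIter α (m + n) = zIter α m ∘ zIter α n := by
  simp only [zIter_eq, zpow_add]; rfl

theorem zIter_cont {X : Type*} [TopologicalSpace X] (α : X ≃ₜ X) (m : ℤ) :
    Continuous (zIter α m) := by
  rw [zIter_eq]; exact (α ^ m).continuous

section
open Filter Topology
variable {X : Type*} [MetricSpace X] [CompactSpace X] (α : X ≃ₜ X) {l : Filter ℤ}

theorem PL_closed : IsClosed (PL α l) := isClosed_setOf_clusterPt

theorem PL_sub : PL α l ⊆ closure {h : X → X | ∃ n : ℤ, h = zIter α n} := by
  intro f hf
  obtain ⟨U, _, hU⟩ := mapClusterPt_iff_ultrafilter.1 hf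
  exact mem_closure_of_tendsto hU (Eventually.of_forall fun n => ⟨n, rfl⟩)

theorem PL_nonempty [l.NeBot] : (PL α l).Nonempty := by
  obtain ⟨f, hf⟩ := exists_clusterPt_of_compactSpace (map (fun n => zIter α n) l)
  exact ⟨f, hf⟩

theorem PL_shift (hs : ∀ k : ℤ, Tendsto (fun n => n + k) l l) {p : X → X} (hp : p ∈ PL α l)
    (k : ℤ) : p ∘ zIter α k ∈ PL α l ∧ zIter α k ∘ p ∈ PL α l := by
  obtain ⟨U, hUl, hU⟩ := mapClusterPt_iff_ultrafilter.1 hp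
  have hm : ((U.map (fun n => n + k) : Ultrafilter ℤ) : Filter ℤ) ≤ l :=
    ((hs k).mono_left hUl)
  rw [tendsto_pi_nhds] at hU
  constructor
  · refine mapClusterPt_iff_ultrafilter.2 ⟨U.map (fun n => n + k), hm, ?_⟩
    rw [Ultrafilter.coe_map, tendsto_map'_iff, tendsto_pi_nhds]
    intro x
    simpa [Function.comp_def, zIter_add] using hU (zIter α k x)
  · refine mapClusterPt_iff_ultrafilter.2 ⟨U.map (fun n => n + k), hm, ?_⟩
    rw [Ultrafilter.coe_map, tendsto_map'_iff, tendsto_pi_nhds]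
    intro x
    simpa [Function.comp_def, add_comm _ k, zIter_add] using
      ((zIter_cont α k).tendsto _).comp (hU x)

theorem comp_right_cont (q : X → X) : Continuous (fun f : X → X => f ∘ q) :=
  continuous_pi fun x => continuous_apply (q x)

theorem PL_left (hs : ∀ k : ℤ, Tendsto (fun n => n + k) l l) {f q : X → X}
    (hf : f ∈ closure {h : X → X | ∃ n : ℤ, h = zIter α n}) (hq : q ∈ PL α l) :
    f ∘ q ∈ PL α l := by
  have hc : IsClosed {f : X → X | f ∘ q ∈ PL α l} := (PL_closed α).preimage (comp_right_cont q)
  refine closure_minimal ?_ hc hf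
  rintro _ ⟨n, rfl⟩
  exact (PL_shift α hs hq n).2

theorem PL_simple (hs : ∀ k : ℤ, Tendsto (fun n => n + k) l l)
    (H : ∀ p ∈ PL α l, ∀ q ∈ PL α l, ∀ x y, p x = p y → q x = q y)
    {p r : X → X} (hp : p ∈ PL α l) (hr : r ∈ PL α l) : ∃ g ∈ PL α l, r = g ∘ p := by
  letI : Semigroup (X → X) := { mul := fun f g => f ∘ g, mul_assoc := fun _ _ _ => rfl }
  obtain ⟨u, ⟨q, hq, rfl⟩, hu⟩ := exists_idempotent_in_compact_subsemigroup
    (M := X → X) (fun r => comp_right_cont r) ((fun g => g ∘ p) '' PL α l) ⟨_, p, hp, rfl⟩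
    ((PL_closed α).isCompact.image (comp_right_cont p)) (by
      rintro _ ⟨a, ha, rfl⟩ _ ⟨b, hb, rfl⟩
      exact ⟨a ∘ p ∘ b, PL_left α hs (PL_sub α ha) (PL_left α hs (PL_sub α hp) hb), rfl⟩)
  refine ⟨r ∘ q, PL_left α hs (PL_sub α hr) hq, ?_⟩
  have hqp := PL_left α hs (PL_sub α hq) hp
  funext x
  exact (H _ hqp r hr _ _ (congrFun hu x)).symm

theorem PL_ker (β : X → X) (e : ℤ → ℕ) (he : Tendsto e l atTop)
    (hb : ∀ᶠ n in l, zIter α n = β^[e n])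
    (hAD : ∀ x y : X, (∀ ε > 0, ∃ n : ℕ, dist (β^[n] x) (β^[n] y) < ε) →
      Tendsto (fun n : ℕ => dist (β^[n] x) (β^[n] y)) atTop (𝓝 0)) :
    ∀ p ∈ PL α l, ∀ q ∈ PL α l, ∀ x y, p x = p y → q x = q y := by
  intro p hp q hq x y hxy
  have main : ∀ f ∈ PL α l, ∃ U : Ultrafilter ℤ, (U : Filter ℤ) ≤ l ∧
      Tendsto (fun n => dist (β^[e n] x) (β^[e n] y)) U (𝓝 (dist (f x) (f y))) := by
    intro f hf
    obtain ⟨U, hUl, hU⟩ := mapClusterPt_iff_ultrafilter.1 hf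
    rw [tendsto_pi_nhds] at hU
    refine ⟨U, hUl, ((hU x).dist (hU y)).congr' ?_⟩
    filter_upwards [hUl hb] with n hn
    rw [hn]
  obtain ⟨U, hUl, hU⟩ := main p hp
  obtain ⟨V, hVl, hV⟩ := main q hq
  rw [hxy, dist_self] at hU
  have h0 := hAD x y (fun ε hε => by
    obtain ⟨n, hn⟩ := (hU.eventually (gt_mem_nhds hε)).exists
    exact ⟨e n, hn⟩)
  have h1 := h0.comp (he.mono_left hVl)
  exact dist_eq_zero.1 (tendsto_nhds_unique hV h1)

theorem E_cases {f : X → X} (hf : f ∈ closure {h : X → X | ∃ n : ℤ, h = zIter α n}) :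
    (∃ n, f = zIter α n) ∨ f ∈ PL α atTop ∨ f ∈ PL α atBot := by
  have hr : {h : X → X | ∃ n : ℤ, h = zIter α n} = Set.range (fun n => zIter α n) := by
    ext h; simp [eq_comm]
  have hf' : MapClusterPt f ⊤ (fun n => zIter α n) := by
    rw [hr, mem_closure_iff_clusterPt] at hf
    rwa [MapClusterPt, map_top]
  obtain ⟨U, -, hU⟩ := mapClusterPt_iff_ultrafilter.1 hf'
  rcases U.le_cofinite_or_eq_pure with h | ⟨n, rfl⟩
  · right
    rw [Int.cofinite_eq, Ultrafilter.le_sup_iff] at h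
    rcases h with h | h
    · exact Or.inr (mapClusterPt_iff_ultrafilter.2 ⟨U, h, hU⟩)
    · exact Or.inl (mapClusterPt_iff_ultrafilter.2 ⟨U, h, hU⟩)
  · left
    exact ⟨n, tendsto_nhds_unique hU (tendsto_pure_nhds _ n)⟩

end

/-- If a homeomorphism `α` of a compact metric space generates an almost
distal `ℤ`-action (forward proximal implies forward asymptotic, backward proximal implies
backward asymptotic), then `E = closure {α^n : n ∈ ℤ}` is nearly simple: it has a unique
minimal two-sided ideal, which contains all elements with no compositional inverse in `E`. -/
theorem stmt_16 {X : Type*} [MetricSpace X] [CompactSpace X] (α : X ≃ₜ X)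
    (hADfwd : ∀ x y : X,
      (∀ ε > 0, ∃ n : ℕ, dist ((⇑α)^[n] x) ((⇑α)^[n] y) < ε) →
      Filter.Tendsto (fun n : ℕ => dist ((⇑α)^[n] x) ((⇑α)^[n] y))
        Filter.atTop (nhds 0))
    (hADbwd : ∀ x y : X,
      (∀ ε > 0, ∃ n : ℕ, dist ((⇑α.symm)^[n] x) ((⇑α.symm)^[n] y) < ε) →
      Filter.Tendsto (fun n : ℕ => dist ((⇑α.symm)^[n] x) ((⇑α.symm)^[n] y))
        Filter.atTop (nhds 0)) :
    ∃ K : Set (X → X),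
      IsIdealIn (closure {h : X → X | ∃ n : ℤ, h = zIter α n}) K ∧
      (∀ I : Set (X → X),
        IsIdealIn (closure {h : X → X | ∃ n : ℤ, h = zIter α n}) I → I ⊆ K → I = K) ∧
      (∀ I : Set (X → X),
        IsIdealIn (closure {h : X → X | ∃ n : ℤ, h = zIter α n}) I →
        (∀ J : Set (X → X),
          IsIdealIn (closure {h : X → X | ∃ n : ℤ, h = zIter α n}) J → J ⊆ I → J = I) →
        I = K) ∧
      (∀ f ∈ closure {h : X → X | ∃ n : ℤ, h = zIter α n},
        (¬∃ g ∈ closure {h : X → X | ∃ n : ℤ, h = zIter α n},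
          f ∘ g = id ∧ g ∘ f = id) → f ∈ K) := by
  have sT : ∀ k : ℤ, Filter.Tendsto (fun n => n + k) Filter.atTop Filter.atTop :=
    fun k => Filter.tendsto_atTop_add_const_right _ k Filter.tendsto_id
  have sB : ∀ k : ℤ, Filter.Tendsto (fun n => n + k) Filter.atBot Filter.atBot :=
    fun k => Filter.tendsto_atBot_add_const_right _ k Filter.tendsto_id
  have tN : Filter.Tendsto Int.toNat Filter.atTop Filter.atTop :=
    Filter.tendsto_atTop.2 fun b => (Filter.eventually_ge_atTop (b : ℤ)).mono fun n hn => by omega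
  have HT := PL_ker (l := Filter.atTop) α α Int.toNat tN
    ((Filter.eventually_ge_atTop 0).mono fun n hn => by simp [zIter, hn]) hADfwd
  have HB := PL_ker (l := Filter.atBot) α α.symm (fun n => (-n).toNat)
    (tN.comp Filter.tendsto_neg_atBot_atTop)
    ((Filter.eventually_lt_atBot 0).mono fun n hn => by simp [zIter, not_le.2 hn]) hADbwd
  set E := closure {h : X → X | ∃ n : ℤ, h = zIter α n} with hE
  have hK : IsIdealIn E (PL α Filter.atTop ∪ PL α Filter.atBot) := by
    refine ⟨(PL_nonempty α).mono Set.subset_union_left,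
      Set.union_subset (PL_sub α) (PL_sub α), fun f hf g hg => ⟨?_, ?_⟩⟩
    · exact hg.imp (PL_left α sT hf) (PL_left α sB hf)
    · have hgE : g ∈ E := hg.elim (fun h => PL_sub α h) (fun h => PL_sub α h)
      rcases E_cases α hf with ⟨n, rfl⟩ | h | h
      · exact hg.imp (fun h => (PL_shift α sT h n).1) (fun h => (PL_shift α sB h n).1)
      · exact Or.inl (PL_left α sT hgE h)
      · exact Or.inr (PL_left α sB hgE h)
  have hmin : ∀ I, IsIdealIn E I → PL α Filter.atTop ∪ PL α Filter.atBot ⊆ I := by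
    rintro I ⟨⟨i, hi⟩, hIE, hI⟩
    apply Set.union_subset
    · intro r hr
      obtain ⟨p, hp⟩ := PL_nonempty α (l := Filter.atTop)
      obtain ⟨g, hg, rfl⟩ := PL_simple α sT HT (PL_left α sT (hIE hi) hp) hr
      exact (hI g (PL_sub α hg) _ (hI p (PL_sub α hp) i hi).2).1
    · intro r hr
      obtain ⟨p, hp⟩ := PL_nonempty α (l := Filter.atBot)
      obtain ⟨g, hg, rfl⟩ := PL_simple α sB HB (PL_left α sB (hIE hi) hp) hr
      exact (hI g (PL_sub α hg) _ (hI p (PL_sub α hp) i hi).2).1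
  refine ⟨_, hK, fun I hI h => h.antisymm (hmin I hI),
    fun I hI h => (h _ hK (hmin I hI)).symm, fun f hf hn => ?_⟩
  rcases E_cases α hf with ⟨n, rfl⟩ | h
  · refine absurd ⟨zIter α (-n), subset_closure ⟨-n, rfl⟩, ?_, ?_⟩ hn
    · rw [← zIter_add]; simp [zIter]
    · rw [← zIter_add]; simp [zIter]
  · exact h
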